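/- For every nonnegative function f : {0,1}^n → ℝ, f ≥ 0, which is not identically zero, one has E_x Σ_{i=1}^n (f(x) − f(x⊕e_i))² ≥ 2 · E[f²] · log( E[f²] / (E f)² ). -/

import Mathlib

open Finset

/-- Expectation with respect to the uniform measure on the discrete cube `{0,1}^n`. -/
noncomputable def cubeE {n : ℕ} (f : (Fin n → Bool) → ℝ) : ℝ :=
  (∑ x : Fin n → Bool, f x) / 2 ^ n

/-- `x ⊕ e_i` : flip the `i`-th coordinate of `x`. -/
def flipAt {n : ℕ} (x : Fin n → Bool) (i : Fin n) : Fin n → Bool :=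
  Function.update x i (!x i)

/-- Influence of the `i`-th variable of a Boolean function,
`I_i(f) = Pr_x[f(x) ≠ f(x ⊕ e_i)]` under the uniform measure. -/
noncomputable def infl {n : ℕ} (f : (Fin n → Bool) → Bool) (i : Fin n) : ℝ :=
  cubeE (fun x => if f x ≠ f (flipAt x i) then 1 else 0)

/-- Expectation of a Boolean function under the uniform measure. -/
noncomputable def meanB {n : ℕ} (f : (Fin n → Bool) → Bool) : ℝ :=
  cubeE (fun x => if f x then 1 else 0)

/-- Conditional expectation given the first `j` coordinates: `condE f j x` is the
average of `f` over all `y` agreeing with `x` in the first `j` coordinates. -/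
noncomputable def condE {n : ℕ} (f : (Fin n → Bool) → ℝ) (j : ℕ) (x : Fin n → Bool) : ℝ :=
  (∑ y : Fin n → Bool, if ∀ k : Fin n, (k : ℕ) < j → y k = x k then f y else 0) / 2 ^ (n - j)

/-- The Dirichlet form `E(f,f) = E_x Σ_i (f(x) - f(x ⊕ e_i))²`. -/
noncomputable def energy {n : ℕ} (f : (Fin n → Bool) → ℝ) : ℝ :=
  cubeE (fun x => ∑ i : Fin n, (f x - f (flipAt x i)) ^ 2)

/-- Entropy of a nonnegative function: `Ent(g) = E[g log g] - E g · log E g`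
(the convention `0 log 0 = 0` holds since `Real.log 0 = 0`). -/
noncomputable def ent {n : ℕ} (g : (Fin n → Bool) → ℝ) : ℝ :=
  cubeE (fun x => g x * Real.log (g x)) - cubeE g * Real.log (cubeE g)

/-!
Write `Ent` for entropy. The proof combines the logarithmic Sobolev inequality
`2 Ent(f²) ≤ energy f` with the lower bound `Ent(f²) ≥ E[f²] log (E[f²] / (E f)²)`.

Splitting off the first coordinate, with `f₀`, `f₁` the two restrictions of `f`, entropy and energy
both become the average over the two halves plus a remainder. For `f²` the entropy remainder is the
entropy of the pair `(E f₁², E f₀²)`, the energy remainder is `E (f₁ - f₀)²`. By the triangle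
inequality in `L²`, the log-Sobolev inequality reduces to numbers `p, q ≥ 0`, where it asserts
`log 2 - H(x) ≤ 1 - 2 √(x (1 - x))` for the binary entropy `H` at `x = p / (p + q)`. Differentiating
in `x`, this is the fact that the logarithmic mean dominates the geometric mean.

The lower bound on `Ent(f²)` is Jensen's inequality for `t log t` with weights proportional to `f`.
-/

section RealInequalities

lemma log_sub_log_le_sub_div_sqrt {a b : ℝ} (ha : 0 < a) (hab : a ≤ b) :
    Real.log b - Real.log a ≤ (b - a) / √(a * b) := by
  have hb : 0 < b := ha.trans_le hab
  have hlog : Real.log (√b / √a) = (Real.log b - Real.log a) / 2 := by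
    rw [Real.log_div (by positivity) (by positivity), Real.log_sqrt hb.le, Real.log_sqrt ha.le]
    ring
  have hsinh : Real.sinh (Real.log (√b / √a)) = (b - a) / √(a * b) / 2 := by
    rw [Real.sinh_log (by positivity), inv_div, div_sub_div _ _ (by positivity) (by positivity),
      Real.mul_self_sqrt hb.le, Real.mul_self_sqrt ha.le, Real.sqrt_mul ha.le]
  have hnonneg : 0 ≤ Real.log (√b / √a) := by
    rw [hlog]
    linarith [Real.log_le_log ha hab]
  linarith [Real.self_le_sinh_iff.mpr hnonneg]

lemma hasDerivAt_binEntropy_sub_sqrt {x : ℝ} (hx₀ : 0 < x) (hx₁ : x < 1) :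
    HasDerivAt (fun x => Real.binEntropy x - 2 * √(x * (1 - x)))
      (Real.log (1 - x) - Real.log x - (1 - x - x) / √(x * (1 - x))) x := by
  have hpos : 0 < x * (1 - x) := mul_pos hx₀ (sub_pos.mpr hx₁)
  have hmul : HasDerivAt (fun x : ℝ => x * (1 - x)) (1 - x - x) x :=
    ((hasDerivAt_id' x).mul ((hasDerivAt_id' x).const_sub 1)).congr_deriv (by ring)
  refine (Real.hasDerivAt_binEntropy hx₀.ne' hx₁.ne).sub
    (((hmul.sqrt hpos.ne').const_mul 2).congr_deriv ?_)
  ring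

lemma antitoneOn_binEntropy_sub_sqrt :
    AntitoneOn (fun x => Real.binEntropy x - 2 * √(x * (1 - x))) (Set.Icc 0 2⁻¹) := by
  refine antitoneOn_of_hasDerivWithinAt_nonpos (convex_Icc 0 2⁻¹) (by fun_prop)
    (f' := fun x => Real.log (1 - x) - Real.log x - (1 - x - x) / √(x * (1 - x))) ?_ ?_
  all_goals
    rw [interior_Icc]
    rintro x ⟨hx₀, hx₁⟩
  · exact (hasDerivAt_binEntropy_sub_sqrt hx₀ (by linarith)).hasDerivWithinAt
  · exact sub_nonpos.mpr (log_sub_log_le_sub_div_sqrt hx₀ (by linarith))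

lemma log_two_sub_binEntropy_le {x : ℝ} (hx₀ : 0 ≤ x) (hx₁ : x ≤ 1) :
    Real.log 2 - Real.binEntropy x ≤ 1 - 2 * √(x * (1 - x)) := by
  wlog hx : x ≤ 2⁻¹ generalizing x
  · simpa [mul_comm] using this (x := 1 - x) (by linarith) (by linarith) (by linarith)
  have hhalf : √(2⁻¹ * (1 - 2⁻¹)) = (2⁻¹ : ℝ) := by
    rw [show (1 - 2⁻¹ : ℝ) = 2⁻¹ by norm_num, Real.sqrt_mul_self (by norm_num)]
  have hanti := antitoneOn_binEntropy_sub_sqrt ⟨hx₀, hx⟩ (Set.right_mem_Icc.mpr (by norm_num)) hx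
  simp only [Real.binEntropy_two_inv, hhalf] at hanti
  linarith

lemma sum_mul_mul_log_le_sum_mul_mul_log {ι : Type*} (s : Finset ι) {w p : ι → ℝ}
    (hw : ∀ i ∈ s, 0 ≤ w i) (hp : ∀ i ∈ s, 0 ≤ p i) :
    (∑ i ∈ s, w i * p i) * Real.log ((∑ i ∈ s, w i * p i) / ∑ i ∈ s, w i) ≤
      ∑ i ∈ s, w i * (p i * Real.log (p i)) := by
  rcases (sum_nonneg hw).eq_or_lt' with hzero | hpos
  · have hw_zero := (sum_eq_zero_iff_of_nonneg hw).mp hzero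
    rw [hzero, div_zero, Real.log_zero, mul_zero, sum_eq_zero fun i hi => by simp [hw_zero i hi]]
  · have hjensen := Real.convexOn_mul_log.map_centerMass_le hw hpos hp
    simp only [centerMass, smul_eq_mul, Function.comp_apply, inv_mul_eq_div] at hjensen
    rwa [div_mul_eq_mul_div, div_le_div_iff_of_pos_right hpos] at hjensen

lemma sq_sqrt_sum_sq_sub_le {ι : Type*} (s : Finset ι) (f g : ι → ℝ) :
    (√(∑ i ∈ s, f i ^ 2) - √(∑ i ∈ s, g i ^ 2)) ^ 2 ≤ ∑ i ∈ s, (f i - g i) ^ 2 := by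
  have hf := Real.sq_sqrt (sum_nonneg fun i (_ : i ∈ s) => sq_nonneg (f i))
  have hg := Real.sq_sqrt (sum_nonneg fun i (_ : i ∈ s) => sq_nonneg (g i))
  have hexpand : ∑ i ∈ s, (f i - g i) ^ 2 =
      ∑ i ∈ s, f i ^ 2 - 2 * ∑ i ∈ s, f i * g i + ∑ i ∈ s, g i ^ 2 := by
    simp only [sub_sq, sum_add_distrib, sum_sub_distrib, mul_sum, mul_assoc]
  rw [hexpand, sub_sq, hf, hg]
  linarith [Real.sum_mul_le_sqrt_mul_sqrt s f g]

end RealInequalities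

section PairEntropy

/-- The entropy `Ent(g)` of the function `g` on the uniform two-point space with values `p` and
`q`; it is the remainder when the entropy on a cube is split along one coordinate. -/
noncomputable def pairEnt (p q : ℝ) : ℝ :=
  (p * Real.log p + q * Real.log q) / 2 - (p + q) / 2 * Real.log ((p + q) / 2)

lemma pairEnt_mul_one_sub (s x : ℝ) :
    pairEnt (s * x) (s * (1 - x)) = s / 2 * (Real.log 2 - Real.binEntropy x) := by
  have hx := Real.negMulLog_mul s x
  have hx' := Real.negMulLog_mul s (1 - x)
  have hhalf := Real.negMulLog_mul s 2⁻¹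
  rw [pairEnt, Real.binEntropy_eq_negMulLog_add_negMulLog_one_sub,
    show (s * x + s * (1 - x)) / 2 = s * 2⁻¹ by ring]
  simp only [Real.negMulLog, Real.log_inv] at hx hx' hhalf ⊢
  linarith

lemma pairEnt_le_sq_sqrt_sub_sqrt {p q : ℝ} (hp : 0 ≤ p) (hq : 0 ≤ q) :
    2 * pairEnt p q ≤ (√p - √q) ^ 2 := by
  obtain ⟨s, x, hs, hx₀, hx₁, rfl, rfl⟩ : ∃ s x : ℝ, 0 ≤ s ∧ 0 ≤ x ∧ x ≤ 1 ∧
      s * x = p ∧ s * (1 - x) = q := by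
    rcases (add_nonneg hp hq).eq_or_lt' with hzero | hpos
    · exact ⟨0, 0, le_rfl, le_rfl, zero_le_one, by linarith, by linarith⟩
    · refine ⟨p + q, p / (p + q), hpos.le, by positivity, (div_le_one hpos).mpr (by linarith),
        mul_div_cancel₀ p hpos.ne', ?_⟩
      rw [mul_sub, mul_div_cancel₀ p hpos.ne']
      ring
  have hx : √(x * (1 - x)) = √x * √(1 - x) := Real.sqrt_mul hx₀ _
  calc
    2 * pairEnt (s * x) (s * (1 - x)) = s * (Real.log 2 - Real.binEntropy x) := by
      rw [pairEnt_mul_one_sub]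
      ring
    _ ≤ s * (1 - 2 * √(x * (1 - x))) :=
      mul_le_mul_of_nonneg_left (log_two_sub_binEntropy_le hx₀ hx₁) hs
    _ = s * (√x - √(1 - x)) ^ 2 := by
      rw [hx, sub_sq, Real.sq_sqrt hx₀, Real.sq_sqrt (sub_nonneg.mpr hx₁)]
      ring
    _ = (√(s * x) - √(s * (1 - x))) ^ 2 := by
      rw [Real.sqrt_mul hs, Real.sqrt_mul hs, ← mul_sub, mul_pow, Real.sq_sqrt hs]

end PairEntropy

section Expectation

variable {n : ℕ}

lemma cubeE_add (f g : (Fin n → Bool) → ℝ) :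
    cubeE (fun x => f x + g x) = cubeE f + cubeE g := by
  simp only [cubeE, sum_add_distrib, add_div]

lemma cubeE_nonneg {f : (Fin n → Bool) → ℝ} (hf : ∀ x, 0 ≤ f x) : 0 ≤ cubeE f :=
  div_nonneg (sum_nonneg fun x _ => hf x) (by positivity)

lemma cubeE_pos {f : (Fin n → Bool) → ℝ} (hf : ∀ x, 0 ≤ f x) (hne : ∃ x, f x ≠ 0) :
    0 < cubeE f := by
  obtain ⟨x, hx⟩ := hne
  have hsum : 0 < ∑ x, f x :=
    sum_pos' (fun x _ => hf x) ⟨x, mem_univ x, (hf x).lt_of_ne' hx⟩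
  exact div_pos hsum (by positivity)

lemma sq_sqrt_cubeE_sq_sub_le (f g : (Fin n → Bool) → ℝ) :
    (√(cubeE fun x => f x ^ 2) - √(cubeE fun x => g x ^ 2)) ^ 2 ≤
      cubeE fun x => (f x - g x) ^ 2 := by
  simp only [cubeE]
  rw [Real.sqrt_div' _ (by positivity), Real.sqrt_div' _ (by positivity), ← sub_div, div_pow,
    Real.sq_sqrt (by positivity)]
  gcongr
  exact sq_sqrt_sum_sq_sub_le univ f g

end Expectation

section Slices

variable {n : ℕ}

/-- The restriction of `f` to the subcube on which the first coordinate equals `b`, as a function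
of the remaining coordinates; inductions on the dimension pass through it. -/
def cubeSlice (f : (Fin (n + 1) → Bool) → ℝ) (b : Bool) : (Fin n → Bool) → ℝ :=
  fun x => f (Fin.cons b x)

lemma cubeE_succ (f : (Fin (n + 1) → Bool) → ℝ) :
    cubeE f = (cubeE (cubeSlice f true) + cubeE (cubeSlice f false)) / 2 := by
  have hsum : ∑ x, f x = ∑ x, cubeSlice f true x + ∑ x, cubeSlice f false x := by
    rw [← (Fin.consEquiv fun _ : Fin (n + 1) => Bool).sum_comp f, Fintype.sum_prod_type,
      Fintype.sum_bool]
    rfl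
  rw [cubeE, cubeE, cubeE, hsum, ← add_div, div_div, pow_succ]

lemma ent_succ (g : (Fin (n + 1) → Bool) → ℝ) :
    ent g = (ent (cubeSlice g true) + ent (cubeSlice g false)) / 2 +
      pairEnt (cubeE (cubeSlice g true)) (cubeE (cubeSlice g false)) := by
  have hslice (b : Bool) : cubeSlice (fun x => g x * Real.log (g x)) b =
      fun x => cubeSlice g b x * Real.log (cubeSlice g b x) := rfl
  rw [ent, ent, ent, pairEnt, cubeE_succ, cubeE_succ g, hslice, hslice]
  ring

lemma flipAt_cons_zero (b : Bool) (x : Fin n → Bool) :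
    flipAt (Fin.cons b x : Fin (n + 1) → Bool) 0 = Fin.cons (!b) x := by
  simp only [flipAt, Fin.cons_zero, Fin.update_cons_zero]

lemma flipAt_cons_succ (b : Bool) (x : Fin n → Bool) (i : Fin n) :
    flipAt (Fin.cons b x : Fin (n + 1) → Bool) i.succ = Fin.cons b (flipAt x i) := by
  simp only [flipAt, Fin.cons_succ, Fin.cons_update]

lemma cubeE_cubeSlice_sum_sq_sub_flipAt (f : (Fin (n + 1) → Bool) → ℝ) (b : Bool) :
    cubeE (cubeSlice (fun x => ∑ i, (f x - f (flipAt x i)) ^ 2) b) =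
      cubeE (fun x => (cubeSlice f b x - cubeSlice f (!b) x) ^ 2) + energy (cubeSlice f b) := by
  rw [energy, ← cubeE_add]
  refine congrArg cubeE (funext fun x => ?_)
  simp only [cubeSlice, Fin.sum_univ_succ, flipAt_cons_zero, flipAt_cons_succ]

lemma energy_succ (f : (Fin (n + 1) → Bool) → ℝ) :
    energy f = (energy (cubeSlice f true) + energy (cubeSlice f false)) / 2 +
      cubeE (fun x => (cubeSlice f true x - cubeSlice f false x) ^ 2) := by
  rw [energy, cubeE_succ, cubeE_cubeSlice_sum_sq_sub_flipAt, cubeE_cubeSlice_sum_sq_sub_flipAt,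
    Bool.not_true, Bool.not_false]
  simp only [sub_sq_comm (cubeSlice f false _)]
  ring

end Slices

section EntropyBounds

variable {n : ℕ}

theorem two_mul_ent_sq_le_energy (f : (Fin n → Bool) → ℝ) :
    2 * ent (fun x => f x ^ 2) ≤ energy f := by
  induction n with
  | zero => simp [ent, energy, cubeE]
  | succ n ih =>
    have hslice (b : Bool) : cubeSlice (fun x => f x ^ 2) b = fun x => cubeSlice f b x ^ 2 := rfl
    set p := cubeE fun x => cubeSlice f true x ^ 2
    set q := cubeE fun x => cubeSlice f false x ^ 2
    have hp : 0 ≤ p := cubeE_nonneg fun x => sq_nonneg _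
    have hq : 0 ≤ q := cubeE_nonneg fun x => sq_nonneg _
    have hpair : 2 * pairEnt p q ≤
        cubeE fun x => (cubeSlice f true x - cubeSlice f false x) ^ 2 :=
      (pairEnt_le_sq_sqrt_sub_sqrt hp hq).trans (sq_sqrt_cubeE_sq_sub_le _ _)
    calc
      2 * ent (fun x => f x ^ 2)
        = (2 * ent (fun x => cubeSlice f true x ^ 2) +
            2 * ent (fun x => cubeSlice f false x ^ 2)) / 2 + 2 * pairEnt p q := by
          rw [ent_succ, hslice, hslice]
          ring
      _ ≤ (energy (cubeSlice f true) + energy (cubeSlice f false)) / 2 +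
            cubeE fun x => (cubeSlice f true x - cubeSlice f false x) ^ 2 := by
          gcongr <;> exact ih _
      _ = energy f := (energy_succ f).symm

lemma cubeE_sq_mul_log_le {f : (Fin n → Bool) → ℝ} (hf : ∀ x, 0 ≤ f x) :
    cubeE (fun x => f x ^ 2) * Real.log (cubeE (fun x => f x ^ 2) / cubeE f) ≤
      cubeE (fun x => f x ^ 2 * Real.log (f x)) := by
  have hjensen := sum_mul_mul_log_le_sum_mul_mul_log univ (fun x _ => hf x) fun x _ => hf x
  simp only [← mul_assoc, ← sq] at hjensen
  simp only [cubeE]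
  rw [div_div_div_cancel_right₀ (by positivity), div_mul_eq_mul_div]
  gcongr

lemma cubeE_sq_mul_log_le_ent_sq {f : (Fin n → Bool) → ℝ} (hf : ∀ x, 0 ≤ f x)
    (hne : ∃ x, f x ≠ 0) :
    cubeE (fun x => f x ^ 2) * Real.log (cubeE (fun x => f x ^ 2) / cubeE f ^ 2) ≤
      ent (fun x => f x ^ 2) := by
  have hmean : cubeE f ≠ 0 := (cubeE_pos hf hne).ne'
  have hsq : cubeE (fun x => f x ^ 2) ≠ 0 :=
    (cubeE_pos (fun x => sq_nonneg (f x)) (hne.imp fun _ => pow_ne_zero 2)).ne'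
  have hlog : cubeE (fun x => f x ^ 2 * Real.log (f x ^ 2)) =
      2 * cubeE (fun x => f x ^ 2 * Real.log (f x)) := by
    rw [two_mul, ← cubeE_add]
    simp only [Real.log_pow, Nat.cast_ofNat, two_mul, mul_add]
  have hjensen := cubeE_sq_mul_log_le hf
  rw [Real.log_div hsq hmean] at hjensen
  rw [ent, hlog, Real.log_div hsq (pow_ne_zero 2 hmean), Real.log_pow, Nat.cast_ofNat]
  linarith

end EntropyBounds

/-- **Functional edge-isoperimetric inequality**: for every nonnegative, not identically
zero `f : {0,1}^n → ℝ`, `E_x Σ_i (f(x) - f(x⊕e_i))² ≥ 2 E[f²] log(E[f²]/(E f)²)`. -/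
theorem functional_isoperimetric_inequality {n : ℕ} (f : (Fin n → Bool) → ℝ)
    (hf : ∀ x, 0 ≤ f x) (hne : ∃ x, f x ≠ 0) :
    energy f ≥ 2 * cubeE (fun x => f x ^ 2) *
      Real.log (cubeE (fun x => f x ^ 2) / (cubeE f) ^ 2) := by
  rw [ge_iff_le, mul_assoc]
  calc
    2 * (cubeE (fun x => f x ^ 2) * Real.log (cubeE (fun x => f x ^ 2) / cubeE f ^ 2))
      ≤ 2 * ent (fun x => f x ^ 2) := by
        gcongr
        exact cubeE_sq_mul_log_le_ent_sq hf hne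
    _ ≤ energy f := two_mul_ent_sq_le_energy f
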